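/- Let T be a contraction on a Hilbert space H and W : H → H²(𝔻) ⊗ D_{T*} the map Wh = Σ_{n≥0} zⁿ ⊗ D_{T*}T*ⁿh (well-defined as a bounded map). Then WW* + M_{Θ_T} M_{Θ_T}* = I on H²(𝔻) ⊗ D_{T*}, where Θ_T is the characteristic function of T and M_{Θ_T} : H²(𝔻) ⊗ D_T → H²(𝔻) ⊗ D_{T*} is the associated multiplication operator. -/

import Mathlib

open ContinuousLinearMap

/-!
Write `A = W W* + M M*`, a self-adjoint operator on `ℓ²(ℕ, 𝒟_{T*})`. Since the vectors `zⁿ ⊗ x`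
span a dense subspace, it is enough to show `A (zⁿ ⊗ x) = zⁿ ⊗ x`, one coordinate `m` at a time.

* `W* (zⁿ ⊗ x) = Tⁿ D_{T*} x`, while `M* (zⁿ ⊗ x)` has coordinate `-T* x` at `n` and
  `D_T Tⁿ⁻¹⁻ʲ D_{T*} x` at `j < n`. That `T* x` lies in `𝒟_T` comes from the intertwining relation
  `T D_T = D_{T*} T` (`intertwine_of_sq`).
* For `m ≤ n` the sum in the `m`-th coordinate of `M M* (zⁿ ⊗ x)` telescopes
  (`sum_defect_telescope`) to `D_{T*} Tⁿ⁻ᵐ D_{T*} x - D_{T*} T*ᵐ Tⁿ D_{T*} x`. The second term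
  cancels `W W*`; for `m < n` the first cancels the contribution of `-T` by the intertwining
  relation, and for `m = n` it equals `x - T T* x` and the contribution of `-T` is `T T* x`.
* For `m > n` the coordinate vanishes because `A` is self-adjoint.
-/

/-- If `t b² = a² t` with `a, b ≥ 0`, then `t b = a t`. The defect `x = t b - a t` satisfies
`a x = - x b`; hence `a` commutes with `x x*`, and `a (x x*) = - x b x*` is both nonnegative and
nonpositive. So `a x = 0 = x b`, which forces `x = 0`. -/
lemma intertwine_of_sq {A : Type*} [CStarAlgebra A] [PartialOrder A] [StarOrderedRing A]
    {a b t : A} (ha : 0 ≤ a) (hb : 0 ≤ b) (h : t * (b * b) = (a * a) * t) :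
    t * b = a * t := by
  obtain ⟨x, hx⟩ : ∃ x, x = t * b - a * t := ⟨_, rfl⟩
  have hsa : star a = a := (IsSelfAdjoint.of_nonneg ha).star_eq
  have hsb : star b = b := (IsSelfAdjoint.of_nonneg hb).star_eq
  have hax : a * x = -(x * b) := by
    have : a * x + x * b = t * (b * b) - a * a * t := by rw [hx]; noncomm_ring
    rw [h, sub_self] at this
    exact eq_neg_of_add_eq_zero_left this
  have h1 : a * (x * star x) = -(x * b * star x) := by
    rw [← mul_assoc, hax, neg_mul]
  have h2 : (x * star x) * a = -(x * b * star x) := by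
    have := congrArg star h1
    simpa [hsa, hsb, mul_assoc] using this
  have hpos : 0 ≤ a * (x * star x) :=
    Commute.mul_nonneg ha (mul_star_self_nonneg x) (h1.trans h2.symm)
  have hneg : 0 ≤ x * b * star x := star_right_conjugate_nonneg hb x
  have hz : a * (x * star x) = 0 :=
    le_antisymm (by rw [h1]; exact neg_nonpos.mpr hneg) hpos
  have hax0 : a * x = 0 := by
    rw [← CStarRing.mul_star_self_eq_zero_iff, star_mul, hsa]
    calc a * x * (star x * a) = a * (x * star x) * a := by noncomm_ring
      _ = 0 := by rw [hz, zero_mul]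
  have hxb0 : x * b = 0 := by rw [hax0] at hax; exact neg_eq_zero.mp hax.symm
  have hxa : star x * a = 0 := by simpa [hsa] using congrArg star hax0
  have hbx : b * star x = 0 := by simpa [hsb] using congrArg star hxb0
  have h3 : star x * x * star x = 0 := by
    calc star x * x * star x
        = star x * t * (b * star x) - star x * a * (t * star x) := by
          conv_lhs => rw [mul_assoc, show x * star x = (t * b - a * t) * star x by rw [← hx]]
          noncomm_ring
      _ = 0 := by rw [hbx, hxa]; simp
  have h4 : x * star x = 0 := by
    rw [← CStarRing.mul_star_self_eq_zero_iff, star_mul, star_star]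
    calc x * star x * (x * star x) = x * (star x * x * star x) := by noncomm_ring
      _ = 0 := by rw [h3, mul_zero]
  rw [CStarRing.mul_star_self_eq_zero_iff, hx] at h4
  exact sub_eq_zero.mp h4

/-- The sum telescopes because `D_T² = I - T*T`. -/
lemma sum_defect_telescope
    {H : Type*} [NormedAddCommGroup H] [InnerProductSpace ℂ H] [CompleteSpace H]
    (T DT DTs : H →L[ℂ] H) (hDT2 : DT ∘L DT = 1 - adjoint T ∘L T) (y : H) (m : ℕ) :
    ∑ k ∈ Finset.range m, DTs (((adjoint T) ^ k) (DT (DT ((T ^ k) y))))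
      = DTs y - DTs (((adjoint T) ^ m) ((T ^ m) y)) := by
  have h (z : H) : DT (DT z) = z - adjoint T (T z) := by
    simpa using congrArg (fun S : H →L[ℂ] H => S z) hDT2
  induction m with
  | zero => simp
  | succ m ih =>
    rw [Finset.sum_range_succ, ih, h, pow_succ (adjoint T), pow_succ' T]
    simp

/-- Vectors of `ℓ²(ℕ, E)` are separated by the vectors `zᵐ ⊗ y`. -/
lemma lp_ext_inner_single {E : Type*} [NormedAddCommGroup E] [InnerProductSpace ℂ E]
    {f g : lp (fun _ : ℕ => E) 2}
    (h : ∀ (m : ℕ) (y : E), inner ℂ (lp.single 2 m y) f = inner ℂ (lp.single 2 m y) g) :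
    f = g := by
  apply lp.ext
  funext m
  refine ext_inner_left ℂ fun y => ?_
  have := h m y
  rwa [lp.inner_single_left, lp.inner_single_left] at this

/-- Let `T` be a contraction, `K = 𝒟_T` and `K' = 𝒟_{T*}` the defect spaces (closures of
the ranges of `D_T` and `D_{T*}`), `W : H → ℓ²(ℕ, 𝒟_{T*})` the map
`W h = (D_{T*} T*ⁿ h)_{n≥0}` (i.e. `Σ zⁿ ⊗ D_{T*}T*ⁿh` in `H²(𝔻) ⊗ 𝒟_{T*}`), and
`M_{Θ_T} : ℓ²(ℕ, 𝒟_T) → ℓ²(ℕ, 𝒟_{T*})` the multiplication operator with symbol the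
characteristic function `Θ_T(z) = -T + z D_{T*}(I - zT*)⁻¹ D_T`, i.e.
`(M f)ₙ = -T fₙ + Σ_{k<n} D_{T*} T*ᵏ D_T f_{n-1-k}`.  Then
`W W* + M_{Θ_T} M_{Θ_T}* = I` on `H²(𝔻) ⊗ 𝒟_{T*}`. -/
theorem WWstar_add_MMstar_eq_id
    {H : Type*} [NormedAddCommGroup H] [InnerProductSpace ℂ H] [CompleteSpace H]
    (T DT DTs : H →L[ℂ] H) (hT : ‖T‖ ≤ 1)
    (hDT : DT.IsPositive) (hDT2 : DT ∘L DT = 1 - adjoint T ∘L T)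
    (hDTs : DTs.IsPositive) (hDTs2 : DTs ∘L DTs = 1 - T ∘L adjoint T)
    (K K' : Submodule ℂ H) [CompleteSpace K] [CompleteSpace K']
    (hK : (K : Set H) = closure (Set.range ⇑DT))
    (hK' : (K' : Set H) = closure (Set.range ⇑DTs))
    (W : H →L[ℂ] lp (fun _ : ℕ => K') 2)
    (hW : ∀ (h : H) (n : ℕ), (W h n : H) = DTs (((adjoint T) ^ n) h))
    (M : lp (fun _ : ℕ => K) 2 →L[ℂ] lp (fun _ : ℕ => K') 2)
    (hM : ∀ (f : lp (fun _ : ℕ => K) 2) (n : ℕ),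
      (M f n : H) = -(T (f n : H))
        + ∑ k ∈ Finset.range n, DTs (((adjoint T) ^ k) (DT ((f (n - 1 - k) : H))))) :
    W ∘L adjoint W + M ∘L adjoint M = 1 := by
  have sDT : adjoint DT = DT := hDT.isSelfAdjoint.adjoint_eq
  have sDTs : adjoint DTs = DTs := hDTs.isSelfAdjoint.adjoint_eq
  have hTD : T * DT = DTs * T := by
    refine intertwine_of_sq ((nonneg_iff_isPositive _).mpr hDTs)
      ((nonneg_iff_isPositive _).mpr hDT) ?_
    change T * (DT ∘L DT) = (DTs ∘L DTs) * T
    rw [hDT2, hDTs2]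
    change T * (1 - adjoint T * T) = (1 - T * adjoint T) * T
    noncomm_ring
  have hTD' (z : H) : T (DT z) = DTs (T z) :=
    congrArg (fun S : H →L[ℂ] H => S z) hTD
  have hDT' (z : H) : adjoint T (DTs z) = DT (adjoint T z) := by
    have := congrArg star hTD
    simp only [star_mul, star_eq_adjoint, sDT, sDTs] at this
    exact (congrArg (fun S : H →L[ℂ] H => S z) this).symm
  have hDTs2' (z : H) : DTs (DTs z) = z - T (adjoint T z) := by
    simpa using congrArg (fun S : H →L[ℂ] H => S z) hDTs2
  have hDTK (z : H) : DT z ∈ K := by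
    have : DT z ∈ (K : Set H) := by rw [hK]; exact subset_closure ⟨z, rfl⟩
    exact this
  have hTK (x : K') : adjoint T (x : H) ∈ K := by
    have hx : (x : H) ∈ closure (Set.range DTs) := by rw [← hK']; exact x.2
    have hmaps : Set.MapsTo (adjoint T) (Set.range DTs) (Set.range DT) := by
      rintro _ ⟨z, rfl⟩
      exact ⟨adjoint T z, (hDT' z).symm⟩
    have := hmaps.closure (adjoint T).continuous hx
    rw [← hK] at this
    exact this
  have adjpow (k : ℕ) : adjoint (adjoint T ^ k) = T ^ k := by
    rw [← star_eq_adjoint, ← star_eq_adjoint, star_pow, star_star]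
  have hWs (n : ℕ) (x : K') : adjoint W (lp.single 2 n x) = (T ^ n) (DTs x) := by
    refine ext_inner_right ℂ fun h => ?_
    rw [adjoint_inner_left, lp.inner_single_left, Submodule.coe_inner, hW,
      ← adjoint_inner_left, sDTs, ← adjoint_inner_left, adjpow]
  -- Coordinates of `M* (zⁿ ⊗ x)` are identified by testing against `zʲ ⊗ c`.
  have key (n : ℕ) (x : K') (j : ℕ) (c : K) :
      inner ℂ ((adjoint M (lp.single 2 n x)) j) c
        = inner ℂ (x : H) ((M (lp.single 2 j c) n : K') : H) := by
    rw [← lp.inner_single_right, adjoint_inner_left, lp.inner_single_left, Submodule.coe_inner]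
  have hMs_eq (n : ℕ) (x : K') :
      ((adjoint M (lp.single 2 n x)) n : H) = -(adjoint T x) := by
    suffices h : (adjoint M (lp.single 2 n x)) n = (⟨-(adjoint T x), K.neg_mem (hTK x)⟩ : K) by
      rw [h]
    refine ext_inner_right ℂ fun c => ?_
    rw [key, hM, Submodule.coe_inner, Finset.sum_eq_zero, lp.single_apply_self]
    · simp [adjoint_inner_left]
    · intro k hk
      have : n - 1 - k ≠ n := by have := Finset.mem_range.mp hk; omega
      rw [lp.single_apply_ne _ _ _ this]
      simp
  have hMs_lt (n : ℕ) (x : K') (j : ℕ) (hj : j < n) :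
      ((adjoint M (lp.single 2 n x)) j : H) = DT ((T ^ (n - 1 - j)) (DTs x)) := by
    suffices h : (adjoint M (lp.single 2 n x)) j
        = (⟨DT ((T ^ (n - 1 - j)) (DTs x)), hDTK _⟩ : K) by
      rw [h]
    refine ext_inner_right ℂ fun c => ?_
    rw [key, hM, Submodule.coe_inner, Finset.sum_eq_single (n - 1 - j),
      lp.single_apply_ne _ _ _ hj.ne', show n - 1 - (n - 1 - j) = j by omega,
      lp.single_apply_self]
    · simp only [ZeroMemClass.coe_zero, map_zero, neg_zero, zero_add]
      rw [← adjoint_inner_left, sDTs, ← adjoint_inner_left, adjpow, ← adjoint_inner_left, sDT]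
    · intro k hk hkj
      have : n - 1 - k ≠ j := by have := Finset.mem_range.mp hk; omega
      rw [lp.single_apply_ne _ _ _ this]
      simp
    · intro h
      exact absurd (Finset.mem_range.mpr (by omega)) h
  obtain ⟨A, hA⟩ : ∃ A, A = W ∘L adjoint W + M ∘L adjoint M := ⟨_, rfl⟩
  have hAsym (f g : lp (fun _ : ℕ => K') 2) : inner ℂ (A f) g = inner ℂ f (A g) := by
    rw [hA]
    exact ((isPositive_self_comp_adjoint W).add
      (isPositive_self_comp_adjoint M)).inner_left_eq_inner_right f g
  have hAapp (n : ℕ) (x : K') (m : ℕ) : ((A (lp.single 2 n x)) m : H)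
      = DTs (((adjoint T) ^ m) ((T ^ n) (DTs x))) +
        (-(T ((adjoint M (lp.single 2 n x)) m : H)) + ∑ k ∈ Finset.range m,
          DTs (((adjoint T) ^ k) (DT ((adjoint M (lp.single 2 n x)) (m - 1 - k) : H)))) := by
    rw [← hM, ← hWs, ← hW, hA]
    simp
  -- On or above the diagonal (`m ≤ n`) the sum telescopes.
  have hsum (n : ℕ) (x : K') (m : ℕ) (hmn : m ≤ n) : ∑ k ∈ Finset.range m,
      DTs (((adjoint T) ^ k) (DT ((adjoint M (lp.single 2 n x)) (m - 1 - k) : H)))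
      = DTs ((T ^ (n - m)) (DTs x)) - DTs (((adjoint T) ^ m) ((T ^ n) (DTs x))) := by
    have e : (T ^ n) (DTs x) = (T ^ m) ((T ^ (n - m)) (DTs x)) := by
      rw [show (T ^ m) ((T ^ (n - m)) (DTs x)) = (T ^ m * T ^ (n - m)) (DTs x) from rfl,
        ← pow_add, Nat.add_sub_cancel' hmn]
    rw [e, ← sum_defect_telescope T DT DTs hDT2]
    refine Finset.sum_congr rfl fun k hk => ?_
    have hk' := Finset.mem_range.mp hk
    rw [hMs_lt n x _ (by omega), show n - 1 - (m - 1 - k) = k + (n - m) by omega, pow_add]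
    rfl
  have hdiag (n : ℕ) (x : K') : (A (lp.single 2 n x)) n = x := by
    apply Subtype.ext
    rw [hAapp, hsum n x n le_rfl, hMs_eq, Nat.sub_self, pow_zero, one_apply_eq_self, hDTs2',
      map_neg]
    abel
  have hupper (n : ℕ) (x : K') (m : ℕ) (hmn : m < n) : (A (lp.single 2 n x)) m = 0 := by
    apply Subtype.ext
    rw [hAapp, hsum n x m hmn.le, hMs_lt n x m hmn, hTD',
      show n - m = (n - 1 - m) + 1 by omega, pow_succ',
      mul_apply_eq_comp, ZeroMemClass.coe_zero]
    abel
  -- The entries below the diagonal vanish by self-adjointness.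
  have hsingle (n : ℕ) (x : K') : A (lp.single 2 n x) = lp.single 2 n x := by
    refine lp_ext_inner_single fun m z => ?_
    rcases lt_trichotomy m n with h | rfl | h
    · rw [lp.inner_single_left, lp.inner_single_left, hupper n x m h,
        lp.single_apply_ne _ _ _ h.ne]
    · rw [lp.inner_single_left, lp.inner_single_left, hdiag, lp.single_apply_self]
    · rw [← hAsym, lp.inner_single_right, lp.inner_single_right, hupper m z n h,
        lp.single_apply_ne _ _ _ h.ne]
  rw [← hA]
  ext1 g
  refine lp_ext_inner_single fun m y => ?_
  rw [← hAsym, hsingle, one_apply_eq_self]
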